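/- If A is a C*-algebra (A ≠ {0}) in which the spectrum of every self-adjoint element is finite, then A is unital: A possesses a multiplicative identity element. -/

import Mathlib

/-!
A maximal set of nonzero pairwise orthogonal projections is finite: if a sequence of distinct `pₙ`
lay in it, the self-adjoint element `∑ 2⁻ⁿ pₙ` would have every `2⁻ⁿ` in its spectrum. Let `e` be
the sum of this finite set, and put `c = a - e a`, so that `e c = 0`. As the spectrum of `c c*` is
finite, inversion is continuous on it, and functional calculus provides `d` such that `c d` is a
projection with `c d c = c`. Since `e (c d) = 0`, maximality forces `c d = 0`, hence `c = 0`. So `e`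
is a left identity, and a two-sided one because it is self-adjoint.
-/

section OrthogonalProjections

/-- A set of nonzero pairwise orthogonal projections. Mathlib's `OrthogonalIdempotents` is only
available in unital rings, and inclusion of sets is the order in which maximality is taken. -/
structure IsOrthogonalProjectionSet {A : Type*} [Mul A] [Zero A] [Star A] (S : Set A) : Prop where
  isStarProjection : ∀ p ∈ S, IsStarProjection p
  ne_zero : ∀ p ∈ S, p ≠ 0
  pairwise_mul_eq_zero : S.Pairwise fun p q ↦ p * q = 0

theorem exists_maximal_isOrthogonalProjectionSet (A : Type*) [Mul A] [Zero A] [Star A] :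
    ∃ S : Set A, Maximal IsOrthogonalProjectionSet S := by
  refine zorn_subset {S : Set A | IsOrthogonalProjectionSet S} fun C hC hchain ↦
    ⟨⋃₀ C, ⟨?_, ?_, ?_⟩, fun S hS ↦ Set.subset_sUnion_of_mem hS⟩
  · rintro p ⟨S, hS, hp⟩
    exact (hC hS).isStarProjection p hp
  · rintro p ⟨S, hS, hp⟩
    exact (hC hS).ne_zero p hp
  · exact (Set.pairwise_sUnion hchain.directedOn).mpr fun S hS ↦ (hC hS).pairwise_mul_eq_zero

namespace IsOrthogonalProjectionSet

protected theorem insert {A : Type*} [NonUnitalNonAssocRing A] [StarRing A] {S : Set A}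
    (hS : IsOrthogonalProjectionSet S) {q : A} (hq : IsStarProjection q) (hq0 : q ≠ 0)
    (hSq : ∀ p ∈ S, p * q = 0) : IsOrthogonalProjectionSet (insert q S) where
  isStarProjection := Set.forall_mem_insert.mpr ⟨hq, hS.isStarProjection⟩
  ne_zero := Set.forall_mem_insert.mpr ⟨hq0, hS.ne_zero⟩
  pairwise_mul_eq_zero := hS.pairwise_mul_eq_zero.insert fun p hp _ ↦ by
    have hcomm : Commute p q := (hS.isStarProjection p hp).isSelfAdjoint.commute_of_mul_eq_zero
      hq.isSelfAdjoint (hSq p hp)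
    exact ⟨hcomm.eq.symm.trans (hSq p hp), hSq p hp⟩

theorem mul_sum_of_mem {A : Type*} [NonUnitalNonAssocSemiring A] [Star A] {s : Finset A}
    (hs : IsOrthogonalProjectionSet (s : Set A)) {p : A} (hp : p ∈ s) : p * ∑ r ∈ s, r = p := by
  rw [Finset.mul_sum, Finset.sum_eq_single_of_mem p hp fun r hr hrp ↦
    hs.pairwise_mul_eq_zero hp hr hrp.symm]
  exact (hs.isStarProjection p hp).isIdempotentElem

theorem isStarProjection_sum {A : Type*} [NonUnitalNonAssocSemiring A] [StarRing A]
    {s : Finset A} (hs : IsOrthogonalProjectionSet (s : Set A)) :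
    IsStarProjection (∑ p ∈ s, p) where
  isIdempotentElem := by
    rw [IsIdempotentElem, Finset.sum_mul]
    exact Finset.sum_congr rfl fun p hp ↦ hs.mul_sum_of_mem hp
  isSelfAdjoint := isSelfAdjoint_sum s fun p hp ↦ (hs.isStarProjection p hp).isSelfAdjoint

theorem eq_zero_of_maximal_of_sum_mul_eq_zero {A : Type*} [NonUnitalRing A] [StarRing A]
    {s : Finset A} (hs : Maximal IsOrthogonalProjectionSet (s : Set A)) {q : A}
    (hq : IsStarProjection q) (hsq : (∑ p ∈ s, p) * q = 0) : q = 0 := by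
  by_contra hq0
  have hpq (p : A) (hp : p ∈ s) : p * q = 0 := by
    rw [← hs.prop.mul_sum_of_mem hp, mul_assoc, hsq, mul_zero]
  have hqs : q ∈ s := hs.mem_of_prop_insert (hs.prop.insert hq hq0 hpq)
  exact hq0 (hq.isIdempotentElem.eq.symm.trans (hpq q hqs))

end IsOrthogonalProjectionSet

end OrthogonalProjections

section Spectrum

theorem mem_quasispectrum_of_mul_eq_smul {R A : Type*} [CommRing R] [NonUnitalRing A] [Module R A]
    [IsScalarTower R A A] [SMulCommClass R A A] {a x : A} {r : R} (hx : x ≠ 0)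
    (hax : a * x = r • x) : r ∈ quasispectrum R a := by
  rw [Unitization.quasispectrum_eq_spectrum_inr, spectrum.mem_iff]
  intro hunit
  have hzero : (algebraMap R (Unitization R A) r - a) * (x : Unitization R A) = 0 := by
    rw [sub_mul, ← Algebra.smul_def, ← Unitization.inr_smul, ← Unitization.inr_mul, hax, sub_self]
  exact hx (Unitization.inr_injective (hunit.mul_right_eq_zero.mp hzero))

theorem mul_eq_smul_of_hasSum_smul {ι R A : Type*} [NonUnitalNonAssocSemiring A]
    [TopologicalSpace A] [IsTopologicalSemiring A] [T2Space A]
    [SMulZeroClass R A] [IsScalarTower R A A]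
    {c : ι → R} {p : ι → A} {a : A} (hp : ∀ i, IsIdempotentElem (p i))
    (horth : Pairwise fun i j ↦ p i * p j = 0) (ha : HasSum (fun i ↦ c i • p i) a) (i : ι) :
    a * p i = c i • p i := by
  refine (ha.mul_right (p i)).unique ?_
  convert hasSum_single i fun j hji ↦ ?_ using 1
  · rw [smul_mul_assoc, (hp i).eq]
  · rw [smul_mul_assoc, horth hji, smul_zero]

theorem exists_isSelfAdjoint_infinite_quasispectrum {A : Type*} [NonUnitalCStarAlgebra A]
    {p : ℕ → A} (hp : ∀ n, IsStarProjection (p n)) (hp0 : ∀ n, p n ≠ 0)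
    (horth : Pairwise fun m n ↦ p m * p n = 0) :
    ∃ a : A, IsSelfAdjoint a ∧ (quasispectrum ℂ a).Infinite := by
  have hsum : Summable fun n ↦ (1 / 2 : ℂ) ^ n • p n := by
    refine .of_norm_bounded summable_geometric_two fun n ↦ ?_
    simpa [norm_smul] using (hp n).norm_le
  have hinj : Function.Injective fun n : ℕ ↦ (1 / 2 : ℂ) ^ n := fun m n hmn ↦ by
    simpa using congr(‖$hmn‖)
  refine ⟨∑' n, (1 / 2 : ℂ) ^ n • p n, ?_, (Set.infinite_range_of_injective hinj).mono ?_⟩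
  · simp [IsSelfAdjoint, tsum_star, fun n ↦ (hp n).isSelfAdjoint.star_eq]
  · rintro _ ⟨n, rfl⟩
    exact mem_quasispectrum_of_mul_eq_smul (hp0 n) <|
      mul_eq_smul_of_hasSum_smul (fun n ↦ (hp n).isIdempotentElem) horth hsum.hasSum n

theorem IsOrthogonalProjectionSet.finite {A : Type*} [NonUnitalCStarAlgebra A]
    (h : ∀ a : A, IsSelfAdjoint a → (quasispectrum ℂ a).Finite) {S : Set A}
    (hS : IsOrthogonalProjectionSet S) : S.Finite := by
  by_contra hinf
  let p : ℕ ↪ S := Set.Infinite.natEmbedding S hinf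
  obtain ⟨a, ha, hainf⟩ := exists_isSelfAdjoint_infinite_quasispectrum
    (p := fun n ↦ (p n : A)) (fun n ↦ hS.isStarProjection _ (p n).2) (fun n ↦ hS.ne_zero _ (p n).2)
    fun m n hmn ↦ hS.pairwise_mul_eq_zero (p m).2 (p n).2
      (Subtype.coe_injective.ne (p.injective.ne hmn))
  exact hainf (h a ha)

end Spectrum

section GeneralizedInverse

/- Mathlib sets `0⁻¹ = 0`, so `z ↦ z⁻¹` vanishes at `0` as the non-unital functional calculus
requires, and `z ↦ z * z⁻¹` is the indicator function of `z ≠ 0`. -/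
theorem exists_isStarProjection_mul_and_mul_mul_eq_of_isStarNormal {A : Type*}
    [NonUnitalCStarAlgebra A] (b : A) [IsStarNormal b]
    (hinv : ContinuousOn (fun z : ℂ ↦ z⁻¹) (quasispectrum ℂ b)) :
    ∃ x : A, IsStarProjection (b * x) ∧ b * x * b = b := by
  have hmul : b * cfcₙ (fun z : ℂ ↦ z⁻¹) b = cfcₙ (fun z : ℂ ↦ z * z⁻¹) b := by
    rw [cfcₙ_mul .., cfcₙ_id' ℂ b]
  have : ContinuousOn (fun z : ℂ ↦ z * z⁻¹) (quasispectrum ℂ b) := continuousOn_id.mul hinv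
  refine ⟨cfcₙ (fun z : ℂ ↦ z⁻¹) b, ?_, ?_⟩ <;> rw [hmul]
  · refine ⟨?_, ?_⟩
    · rw [IsIdempotentElem, ← cfcₙ_mul ..]
      simp only [mul_inv_mul_cancel, ← mul_assoc]
    · rw [IsSelfAdjoint, ← cfcₙ_star]
      refine cfcₙ_congr fun z _ ↦ ?_
      obtain rfl | hz := eq_or_ne z 0 <;> simp [*]
  · nth_rw 2 [← cfcₙ_id' ℂ b]
    rw [← cfcₙ_mul ..]
    simp only [mul_inv_mul_cancel, cfcₙ_id' ℂ b]

theorem mul_eq_self_of_mul_mul_star_self_eq {A : Type*} [NonUnitalNormedRing A] [StarRing A]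
    [CStarRing A] {p c : A} (h : p * (c * star c) = c * star c) : p * c = c := by
  have hzero : (p * c - c) * star c = 0 := by rw [sub_mul, mul_assoc, h, sub_self]
  rw [← sub_eq_zero, ← CStarRing.mul_star_self_eq_zero_iff, star_sub, star_mul, mul_sub,
    ← mul_assoc, hzero, zero_mul, sub_zero]

theorem exists_isStarProjection_mul_and_mul_mul_eq {A : Type*} [NonUnitalCStarAlgebra A] (c : A)
    (hinv : ContinuousOn (fun z : ℂ ↦ z⁻¹) (quasispectrum ℂ (c * star c))) :
    ∃ d : A, IsStarProjection (c * d) ∧ c * d * c = c := by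
  have hnormal : IsStarNormal (c * star c) := (IsSelfAdjoint.mul_star_self c).isStarNormal
  obtain ⟨x, hproj, hx⟩ :=
    exists_isStarProjection_mul_and_mul_mul_eq_of_isStarNormal (c * star c) hinv
  rw [mul_assoc c] at hproj
  rw [mul_assoc c (star c) x] at hx
  exact ⟨star c * x, hproj, mul_eq_self_of_mul_mul_star_self_eq hx⟩

end GeneralizedInverse

theorem mul_eq_self_of_isSelfAdjoint_of_forall_mul_eq {A : Type*} [Mul A] [StarMul A] {e : A}
    (he : IsSelfAdjoint e) (hleft : ∀ a, e * a = a) (a : A) : a * e = a := by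
  simpa [he.star_eq] using congr(star $(hleft (star a)))

/-- If `A` is a nonzero (not necessarily unital) C*-algebra in which the spectrum (in the
unitization) of every self-adjoint element is finite, then `A` has a multiplicative
identity. -/
theorem unital_of_selfAdjoint_spectra_finite
    {A : Type*} [NonUnitalCStarAlgebra A] [Nontrivial A]
    (h : ∀ a : A, IsSelfAdjoint a → (quasispectrum ℂ a).Finite) :
    ∃ e : A, ∀ a : A, e * a = a ∧ a * e = a := by
  obtain ⟨S, hS⟩ := exists_maximal_isOrthogonalProjectionSet A
  lift S to Finset A using hS.prop.finite h
  set e := ∑ p ∈ S, p with he_def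
  have he : IsStarProjection e := hS.prop.isStarProjection_sum
  have hleft (a : A) : e * a = a := by
    set c := a - e * a with hc
    have hec : e * c = 0 := by rw [hc, mul_sub, ← mul_assoc, he.isIdempotentElem.eq, sub_self]
    obtain ⟨d, hd, hcdc⟩ := exists_isStarProjection_mul_and_mul_mul_eq c
      ((h _ (.mul_star_self c)).continuousOn _)
    have hcd : c * d = 0 := IsOrthogonalProjectionSet.eq_zero_of_maximal_of_sum_mul_eq_zero hS hd
      (by rw [← he_def, ← mul_assoc, hec, zero_mul])
    have hc0 : c = 0 := by rw [← hcdc, hcd, zero_mul]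
    exact (sub_eq_zero.mp hc0).symm
  exact ⟨e, fun a ↦
    ⟨hleft a, mul_eq_self_of_isSelfAdjoint_of_forall_mul_eq he.isSelfAdjoint hleft a⟩⟩
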